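/- Let p be a polynomial with real coefficients and let a be a real number. If the function x ↦ p.eval x has a local extremum (local maximum or local minimum) at a, then (X − C a)^2 divides p − C (p.eval a); equivalently, the polynomial in E given by p.comp (C a + X) − C (p.eval a) is divisible by X^2. -/

import Mathlib

open Polynomial

/-! In the Taylor expansion of `p` around `a`, the coefficient of order zero is `p.eval a` and the
coefficient of order one is the derivative at `a`. Subtracting the former leaves a multiple of
`X ^ 2` exactly when the latter vanishes, which Fermat's theorem guarantees at a local extremum. -/

section DoubleRoot

variable {R : Type*}

theorem X_sq_dvd_taylor_sub_C_eval_iff [Ring R] {p : R[X]} {a : R} :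
    X ^ 2 ∣ taylor a p - C (p.eval a) ↔ p.derivative.eval a = 0 := by
  have coeff_zero : (taylor a p - C (p.eval a)).coeff 0 = 0 := by
    rw [coeff_sub, taylor_coeff_zero, coeff_C_zero, sub_self]
  have coeff_one : (taylor a p - C (p.eval a)).coeff 1 = p.derivative.eval a := by
    rw [coeff_sub, taylor_coeff_one, coeff_C_succ, sub_zero]
  simp only [X_pow_dvd_iff, Nat.forall_lt_succ_right, Nat.not_lt_zero, IsEmpty.forall_iff,
    implies_true, true_and, coeff_zero, coeff_one]

theorem X_sub_C_sq_dvd_sub_C_eval_iff [CommRing R] {p : R[X]} {a : R} :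
    (X - C a) ^ 2 ∣ p - C (p.eval a) ↔ p.derivative.eval a = 0 := by
  rw [X_sub_C_pow_dvd_iff, sub_comp, C_comp, ← taylor_apply, X_sq_dvd_taylor_sub_C_eval_iff]

end DoubleRoot

theorem fermat_double_root (p : Polynomial ℝ) (a : ℝ)
    (h : IsLocalExtr (fun x : ℝ => p.eval x) a) :
    (X - C a) ^ 2 ∣ p - C (p.eval a) ∧
      (X : Polynomial ℝ) ^ 2 ∣ p.comp (C a + X) - C (p.eval a) := by
  have derivative_eq_zero : p.derivative.eval a = 0 := h.hasDerivAt_eq_zero (p.hasDerivAt a)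
  rw [add_comm (C a) X, ← taylor_apply]
  exact ⟨X_sub_C_sq_dvd_sub_C_eval_iff.mpr derivative_eq_zero,
    X_sq_dvd_taylor_sub_C_eval_iff.mpr derivative_eq_zero⟩
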